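/- arXiv:1208.5278 — 2 statements merged into one kernel-verified Lean document; each statement's English description precedes it below -/
import Mathlib

section
/- Let n be a nonzero integer, let W_q⁰ = span_ℂ{L₀, M₀} and W_qⁿ = span_ℂ{L_n, M_n} be the corresponding graded subspaces of the q-deformed W(2,2) algebra. Then every linear map D: W_q⁰ → W_qⁿ satisfying [x, D(y)]_q = [y, D(x)]_q for all x, y ∈ W_q⁰ (the derivation condition, since the bracket vanishes identically on W_q⁰) is inner: there exists v ∈ W_qⁿ with D(x) = [x, v]_q for all x ∈ W_q⁰. In other words, H¹(W_q⁰, W_qⁿ) = 0 for n ≠ 0. -/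
noncomputable section

/-- The underlying space of the q-deformed W(2,2) algebra: formal ℂ-linear
combinations of the basis `{L_n, M_n : n ∈ ℤ}`. -/
abbrev Wq : Type := (ℤ →₀ ℂ) × (ℤ →₀ ℂ)

/-- The basis vector `L_n`. -/
def Lb (n : ℤ) : Wq := (Finsupp.single n 1, 0)

/-- The basis vector `M_n`. -/
def Mb (n : ℤ) : Wq := (0, Finsupp.single n 1)

/-- The q-number `[n]_q = (q^n - q^(-n))/(q - q⁻¹)`. -/
def qnum (q : ℂ) (n : ℤ) : ℂ := (q ^ n - q ^ (-n)) / (q - q⁻¹)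

/-- `⟨n⟩_q = q^n + q^(-n)`. -/
def qang (q : ℂ) (n : ℤ) : ℂ := q ^ n + q ^ (-n)

/-- The graded subspace `W_qⁿ = span_ℂ{L_n, M_n}`. -/
def Wgr (n : ℤ) : Submodule ℂ Wq := Submodule.span ℂ {Lb n, Mb n}

/-!
The bracket with `L₀` is multiplication by the scalar `[n]_q` on `W_qⁿ`, and this scalar is
invertible as soon as `q ^ (2 * n) ≠ 1`. The derivation condition for the pair `(L₀, x)` therefore
reads `[n]_q • D x = [x, D L₀]_q`, so that `v = [n]_q⁻¹ • D L₀` works for every `x`.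
-/

/-- The bilinear map `br` is the bracket `[·,·]_q` of the q-deformed W(2,2) algebra: it takes the
prescribed values on the basis vectors `L_n`, `M_n`. -/
structure IsWqBracket (q : ℂ) (br : Wq →ₗ[ℂ] Wq →ₗ[ℂ] Wq) : Prop where
  Lb_Lb : ∀ n m : ℤ, br (Lb n) (Lb m) = qnum q (m - n) • Lb (m + n)
  Lb_Mb : ∀ n m : ℤ, br (Lb n) (Mb m) = qnum q (m - n) • Mb (m + n)
  Mb_Lb : ∀ m n : ℤ, br (Mb m) (Lb n) = qnum q (n - m) • Mb (m + n)
  Mb_Mb : ∀ n m : ℤ, br (Mb n) (Mb m) = 0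

theorem zpow_ne_one_of_forall_pos {G : Type*} [DivisionMonoid G] {q : G}
    (hq : ∀ k : ℤ, 1 ≤ k → q ^ k ≠ 1) {k : ℤ} (hk : k ≠ 0) : q ^ k ≠ 1 := by
  rcases hk.lt_or_gt with hneg | hpos
  · simpa using hq (-k) (by lia)
  · exact hq k hpos

theorem zpow_eq_zpow_neg_iff {G₀ : Type*} [GroupWithZero G₀] {q : G₀} (hq : q ≠ 0) (n : ℤ) :
    q ^ n = q ^ (-n) ↔ q ^ (2 * n) = 1 := by
  rw [zpow_neg, ← mul_eq_one_iff_eq_inv₀ (zpow_ne_zero n hq), ← zpow_add₀ hq, two_mul]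

theorem qnum_ne_zero {q : ℂ} (hq : q ≠ 0) {n : ℤ} (hqn : q ^ (2 * n) ≠ 1) : qnum q n ≠ 0 := by
  have hnum : q ^ n ≠ q ^ (-n) := mt (zpow_eq_zpow_neg_iff hq n).mp hqn
  have hden : q ≠ q⁻¹ := by
    intro h
    have hsq : q ^ (2 : ℤ) = 1 := by
      simpa using (zpow_eq_zpow_neg_iff hq 1).mp (by simpa using h)
    exact hqn (by rw [zpow_mul, hsq, one_zpow])
  exact div_ne_zero (sub_ne_zero.mpr hnum) (sub_ne_zero.mpr hden)

theorem Lb_mem_Wgr (n : ℤ) : Lb n ∈ Wgr n :=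
  Submodule.subset_span (Set.mem_insert _ _)

theorem IsWqBracket.Lb_zero_apply {q : ℂ} {br : Wq →ₗ[ℂ] Wq →ₗ[ℂ] Wq} (hbr : IsWqBracket q br)
    {n : ℤ} {w : Wq} (hw : w ∈ Wgr n) : br (Lb 0) w = qnum q n • w := by
  have heq : Set.EqOn (br (Lb 0)) (qnum q n • LinearMap.id : Wq →ₗ[ℂ] Wq) {Lb n, Mb n} := by
    rintro _ (rfl | rfl)
    · simpa using hbr.Lb_Lb 0 n
    · simpa using hbr.Lb_Mb 0 n
  exact LinearMap.eqOn_span heq hw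

theorem exists_mem_forall_eq_apply_of_isUnit {A R V : Type*} [Semiring R] [AddCommMonoid V]
    [Module R V] {ρ : A → V →ₗ[R] V} {N : Submodule R V} {D : A → V} (hDN : ∀ x, D x ∈ N)
    {a : A} (hD : ∀ x, ρ a (D x) = ρ x (D a)) {c : R} (hc : IsUnit c)
    (ha : ∀ w ∈ N, ρ a w = c • w) : ∃ v ∈ N, ∀ x, D x = ρ x v := by
  obtain ⟨u, rfl⟩ := hc
  refine ⟨(↑u⁻¹ : R) • D a, N.smul_mem _ (hDN a), fun x => ?_⟩
  calc
    D x = (↑u⁻¹ : R) • (u : R) • D x := by rw [smul_smul, Units.inv_mul, one_smul]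
    _ = (↑u⁻¹ : R) • ρ a (D x) := by rw [ha _ (hDN x)]
    _ = (↑u⁻¹ : R) • ρ x (D a) := by rw [hD]
    _ = ρ x ((↑u⁻¹ : R) • D a) := (map_smul _ _ _).symm

theorem H1_W0_Wn_eq_zero_general {q : ℂ} {br : Wq →ₗ[ℂ] Wq →ₗ[ℂ] Wq} (hbr : IsWqBracket q br)
    {n : ℤ} (hn : qnum q n ≠ 0) {D : ↥(Wgr 0) →ₗ[ℂ] Wq}
    (hDval : ∀ x : ↥(Wgr 0), D x ∈ Wgr n)
    (hDder : ∀ x y : ↥(Wgr 0), br (x : Wq) (D y) = br (y : Wq) (D x)) :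
    ∃ v ∈ Wgr n, ∀ x : ↥(Wgr 0), D x = br (x : Wq) v :=
  exists_mem_forall_eq_apply_of_isUnit (ρ := fun x : ↥(Wgr 0) => br x) hDval
    (hDder ⟨Lb 0, Lb_mem_Wgr 0⟩) hn.isUnit fun _ hw => hbr.Lb_zero_apply hw

/-- `H¹(W_q⁰, W_qⁿ) = 0` for `n ≠ 0`: every derivation from `W_q⁰` into the
adjoint module `W_qⁿ` is inner. -/
theorem H1_W0_Wn_eq_zero (q : ℂ) (hq0 : q ≠ 0)
    (hq1 : ∀ k : ℤ, 1 ≤ k → q ^ k ≠ 1)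
    (br : Wq →ₗ[ℂ] Wq →ₗ[ℂ] Wq)
    (hLL : ∀ n m : ℤ, br (Lb n) (Lb m) = qnum q (m - n) • Lb (m + n))
    (hLM : ∀ n m : ℤ, br (Lb n) (Mb m) = qnum q (m - n) • Mb (m + n))
    (hML : ∀ m n : ℤ, br (Mb m) (Lb n) = qnum q (n - m) • Mb (m + n))
    (hMM : ∀ n m : ℤ, br (Mb n) (Mb m) = 0)
    (n : ℤ) (hn : n ≠ 0)
    (D : ↥(Wgr 0) →ₗ[ℂ] Wq)
    (hDval : ∀ x : ↥(Wgr 0), D x ∈ Wgr n)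
    (hDder : ∀ x y : ↥(Wgr 0), br (x : Wq) (D y) = br (y : Wq) (D x)) :
    ∃ v ∈ Wgr n, ∀ x : ↥(Wgr 0), D x = br (x : Wq) v := by
  have hq2n : q ^ (2 * n) ≠ 1 := zpow_ne_one_of_forall_pos hq1 (mul_ne_zero two_ne_zero hn)
  exact H1_W0_Wn_eq_zero_general ⟨hLL, hLM, hML, hMM⟩ (qnum_ne_zero hq0 hq2n) hDval hDder
end
end

section
/- For every integer k ≥ 1, every αᵏ-derivation of the q-deformed W(2,2) algebra is zero: if D: W_q → W_q is a linear map satisfying D ∘ α = α ∘ D and D([x,y]_q) = [αᵏ(x), D(y)]_q − [αᵏ(y), D(x)]_q for all x, y ∈ W_q, then D = 0. -/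
noncomputable section

/-!
Write `H` for the operator `[L₀, ·]`. It is diagonal with eigenvalue `[n]_q` in weight `n`, and
`⟨n⟩_q² = 4 + (q - q⁻¹)² [n]_q²`, so `α² = 4 + (q - q⁻¹)² H²`. If `α x = ⟨m⟩_q x` with `m ≠ 0` and
`[m]_q x = 2ᵏ H x`, then `[m]_q² x = 4ᵏ H² x = 4ᵏ [m]_q² x`, hence `x = 0`.

An `αᵏ`-derivation `D` preserves the eigenspaces of `α`, so `D L₀ = (1 - 2ᵏ)(c L₀ + d M₀)` for some
`c, d`. The identity for `[L₀, L_m]` and the vanishing above give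
`D L_m = ⟨m⟩_qᵏ (c L_m + d M_m)` for `m ≠ 0`. If `(c, d) ≠ 0`, then `ρ m = ⟨m⟩_qᵏ` satisfies
`1 - 2ᵏ = 2 (ρ m)²` for `m ≠ 0`, from `[L_{-m}, L_m]`, and `ρ 1 = 2 (ρ 2) (ρ 1)`, from
`[L_{-1}, L_2]`; so `ρ 2 = 1/2` and `2ᵏ = 1/2`, which is absurd. Hence `D L₀ = 0`, and the identity
for `[L₀, x]` then kills every nonzero weight, while `[L₁, ·]` maps weight `-1` onto weight `0`.
-/

section General

theorem one_sub_two_pow_ne_zero {K : Type*} [Ring K] [CharZero K] {k : ℕ} (hk : 1 ≤ k) :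
    1 - (2 : K) ^ k ≠ 0 := by
  have h : 1 ≠ 2 ^ k := (Nat.one_lt_two_pow (by omega)).ne
  exact sub_ne_zero.mpr (by exact_mod_cast h)

theorem two_pow_mul_two_pow_ne_one {K : Type*} [Ring K] [CharZero K] {k : ℕ} (hk : 1 ≤ k) :
    (2 : K) ^ k * 2 ^ k ≠ 1 := by
  rw [← pow_add]
  exact (sub_ne_zero.mp (one_sub_two_pow_ne_zero (by omega))).symm

theorem ne_two_mul_mul_of_one_sub_two_pow_eq {K : Type*} [Field K] [CharZero K] {k : ℕ}
    (hk : 1 ≤ k) {x y : K} (hx : 1 - 2 ^ k = 2 * x * x) (hy : 1 - 2 ^ k = 2 * y * y) :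
    x ≠ 2 * y * x := by
  intro hxy
  have hx0 : x ≠ 0 := by
    rintro rfl
    exact one_sub_two_pow_ne_zero hk (by simpa using hx)
  have hy_half : 2 * y = 1 := mul_right_cancel₀ hx0 (by rw [one_mul, ← hxy])
  have h_half : 2 * (2 : K) ^ k = 1 := by linear_combination (-2) * hy - (2 * y + 1) * hy_half
  have h_nat : 2 * 2 ^ k = 1 := by exact_mod_cast h_half
  omega

theorem eq_zero_of_smul_eq_smul_apply {K V : Type*} [Field K] [AddCommGroup V] [Module K V]
    {H : V →ₗ[K] V} {s t : K} {x : V} (hs : s ≠ 0) (ht : t * t ≠ 1)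
    (hsq : H (H x) = s ^ 2 • x) (hx : s • x = t • H x) : x = 0 := by
  have h : s ^ 2 • x = (t * t) • s ^ 2 • x :=
    calc s ^ 2 • x = t • H (s • x) := by rw [map_smul, smul_comm t, ← hx, smul_smul, sq]
      _ = (t * t) • s ^ 2 • x := by rw [hx, map_smul, hsq, smul_smul]
  have h' : ((1 - t * t) * s ^ 2) • x = 0 := by rw [mul_smul, sub_smul, one_smul, ← h, sub_self]
  exact (smul_eq_zero.mp h').resolve_left
    (mul_ne_zero (sub_ne_zero.mpr ht.symm) (pow_ne_zero 2 hs))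

theorem pow_apply_eq_pow_smul {R V : Type*} [CommSemiring R] [AddCommMonoid V] [Module R V]
    {f : V →ₗ[R] V} {μ : R} {x : V} (hx : f x = μ • x) (k : ℕ) : (f ^ k) x = μ ^ k • x := by
  induction k with
  | zero => simp
  | succ k ih => rw [pow_succ', Module.End.mul_apply, ih, map_smul, hx, smul_smul, pow_succ]

end General

section AlphaDerivation

variable {R V : Type*} [CommRing R] [AddCommGroup V] [Module R V]

/-- `D` is an `αᵏ`-derivation of the algebra with bracket `br` and twisting map `α`. -/
structure IsAlphaDerivation (br : V →ₗ[R] V →ₗ[R] V) (α : V →ₗ[R] V) (k : ℕ) (D : V →ₗ[R] V) :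
    Prop where
  map_alpha : ∀ x, D (α x) = α (D x)
  map_br : ∀ x y, D (br x y) = br ((α ^ k) x) (D y) - br ((α ^ k) y) (D x)

namespace IsAlphaDerivation

variable {br : V →ₗ[R] V →ₗ[R] V} {α D : V →ₗ[R] V} {k : ℕ} {x y : V} {μ ν : R}

theorem alpha_map (hD : IsAlphaDerivation br α k D) (hx : α x = μ • x) : α (D x) = μ • D x := by
  rw [← hD.map_alpha, hx, map_smul]

theorem map_br_of_alpha_eq_smul (hD : IsAlphaDerivation br α k D) (hx : α x = μ • x)
    (hy : α y = ν • y) : D (br x y) = μ ^ k • br x (D y) - ν ^ k • br y (D x) := by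
  rw [hD.map_br, pow_apply_eq_pow_smul hx, pow_apply_eq_pow_smul hy, map_smul, map_smul,
    LinearMap.smul_apply, LinearMap.smul_apply]

end IsAlphaDerivation

end AlphaDerivation

section QNumbers

theorem qnum_neg (q : ℂ) (n : ℤ) : qnum q (-n) = -qnum q n := by
  rw [qnum, qnum, neg_neg]
  ring

theorem qang_neg (q : ℂ) (n : ℤ) : qang q (-n) = qang q n := by
  rw [qang, qang, neg_neg, add_comm]

theorem qang_zero (q : ℂ) : qang q 0 = 2 := by
  norm_num [qang]

/-- The deformation parameter `q` is generic: nonzero and not a root of unity. -/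
structure IsGenericQ (q : ℂ) : Prop where
  ne_zero : q ≠ 0
  zpow_ne_one : ∀ k : ℤ, 1 ≤ k → q ^ k ≠ 1

namespace IsGenericQ

variable {q : ℂ} {n : ℤ}

theorem zpow_sub_zpow_neg_ne_zero (hq : IsGenericQ q) (hn : n ≠ 0) : q ^ n - q ^ (-n) ≠ 0 := by
  intro h
  have h_pow : q ^ (n + n) = 1 := by
    rw [zpow_add₀ hq.ne_zero]
    nth_rw 1 [sub_eq_zero.mp h]
    rw [← zpow_add₀ hq.ne_zero, neg_add_cancel, zpow_zero]
  rcases lt_or_gt_of_ne hn with hneg | hpos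
  · exact hq.zpow_ne_one (-(n + n)) (by omega) (by rw [zpow_neg, h_pow, inv_one])
  · exact hq.zpow_ne_one (n + n) (by omega) h_pow

theorem sub_inv_ne_zero (hq : IsGenericQ q) : q - q⁻¹ ≠ 0 := by
  simpa using hq.zpow_sub_zpow_neg_ne_zero one_ne_zero

theorem qnum_ne_zero (hq : IsGenericQ q) (hn : n ≠ 0) : qnum q n ≠ 0 :=
  div_ne_zero (hq.zpow_sub_zpow_neg_ne_zero hn) hq.sub_inv_ne_zero

theorem qang_sq (hq : IsGenericQ q) (n : ℤ) :
    qang q n ^ 2 = 4 + (q - q⁻¹) ^ 2 * qnum q n ^ 2 := by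
  have h_inv : q ^ n * q ^ (-n) = 1 := by
    rw [← zpow_add₀ hq.ne_zero, add_neg_cancel, zpow_zero]
  rw [qang, qnum, div_pow, mul_div_cancel₀ _ (pow_ne_zero 2 hq.sub_inv_ne_zero)]
  linear_combination 4 * h_inv

theorem qang_ne_two (hq : IsGenericQ q) (hn : n ≠ 0) : qang q n ≠ 2 := by
  intro h
  have h_sq := hq.qang_sq n
  rw [h] at h_sq
  exact mul_ne_zero (pow_ne_zero 2 hq.sub_inv_ne_zero) (pow_ne_zero 2 (hq.qnum_ne_zero hn))
    (by linear_combination -h_sq)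

end IsGenericQ

end QNumbers

namespace Wq

/-- The general element `c L_n + d M_n` of weight `n`. -/
def weightVec (c d : ℂ) (n : ℤ) : Wq := c • Lb n + d • Mb n

theorem weightVec_one_zero (n : ℤ) : weightVec 1 0 n = Lb n := by
  simp [weightVec]

theorem weightVec_eq_zero_iff {c d : ℂ} {n : ℤ} : weightVec c d n = 0 ↔ c = 0 ∧ d = 0 := by
  simp [weightVec, Lb, Mb, Prod.ext_iff]

theorem smul_weightVec (a c d : ℂ) (n : ℤ) :
    a • weightVec c d n = weightVec (a * c) (a * d) n := by
  simp only [weightVec, smul_add, smul_smul]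

theorem linearMap_ext {N : Type*} [AddCommMonoid N] [Module ℂ N] {f g : Wq →ₗ[ℂ] N}
    (h : ∀ c d n, f (weightVec c d n) = g (weightVec c d n)) : f = g := by
  ext n
  · simpa [weightVec, Lb] using h 1 0 n
  · simpa [weightVec, Mb] using h 0 1 n

section Diagonal

variable {f : Wq →ₗ[ℂ] Wq} {e : ℤ → ℂ}

theorem apply_eq_zero_of_diagonal (hf : ∀ c d i, f (weightVec c d i) = e i • weightVec c d i)
    {φ : Wq →ₗ[ℂ] ℂ} {j : ℤ} (hφ : ∀ c d i, i ≠ j → φ (weightVec c d i) = 0) {μ : ℂ}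
    (he : e j ≠ μ) {x : Wq} (hx : f x = μ • x) : φ x = 0 := by
  have h : φ ∘ₗ f = e j • φ := by
    refine linearMap_ext fun c d i => ?_
    rw [LinearMap.comp_apply, hf, map_smul, LinearMap.smul_apply]
    rcases eq_or_ne i j with rfl | hi
    · rfl
    · rw [hφ c d i hi, smul_zero, smul_zero]
  have h_smul : μ • φ x = e j • φ x := by
    simpa only [LinearMap.comp_apply, LinearMap.smul_apply, hx, map_smul]
      using LinearMap.congr_fun h x
  exact (mul_eq_mul_right_iff.mp h_smul).resolve_left he.symm

theorem exists_eq_weightVec_of_diagonal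
    (hf : ∀ c d i, f (weightVec c d i) = e i • weightVec c d i) {n : ℤ}
    (he : ∀ j, j ≠ n → e j ≠ e n) {x : Wq} (hx : f x = e n • x) :
    ∃ c d, x = weightVec c d n := by
  have h_fst {j : ℤ} (hj : j ≠ n) : x.1 j = 0 :=
    apply_eq_zero_of_diagonal hf (φ := Finsupp.lapply j ∘ₗ LinearMap.fst ℂ _ _)
      (fun c d i hi => by simp [weightVec, Lb, Mb, hi]) (he j hj) hx
  have h_snd {j : ℤ} (hj : j ≠ n) : x.2 j = 0 :=
    apply_eq_zero_of_diagonal hf (φ := Finsupp.lapply j ∘ₗ LinearMap.snd ℂ _ _)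
      (fun c d i hi => by simp [weightVec, Lb, Mb, hi]) (he j hj) hx
  refine ⟨x.1 n, x.2 n, ?_⟩
  ext j <;> rcases eq_or_ne j n with rfl | hj
  · simp [weightVec, Lb, Mb]
  · simp [weightVec, Lb, Mb, h_fst hj, hj.symm]
  · simp [weightVec, Lb, Mb]
  · simp [weightVec, Lb, Mb, h_snd hj, hj.symm]

end Diagonal

end Wq

open Wq

/-- `br` and `α` are the bracket and the twisting map of the `q`-deformed `W(2,2)` algebra, pinned
down by their values on the basis. -/
structure IsQDeformedW22 (q : ℂ) (br : Wq →ₗ[ℂ] Wq →ₗ[ℂ] Wq) (α : Wq →ₗ[ℂ] Wq) : Prop where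
  br_Lb_Lb : ∀ n m : ℤ, br (Lb n) (Lb m) = qnum q (m - n) • Lb (m + n)
  br_Lb_Mb : ∀ n m : ℤ, br (Lb n) (Mb m) = qnum q (m - n) • Mb (m + n)
  br_Mb_Lb : ∀ m n : ℤ, br (Mb m) (Lb n) = qnum q (n - m) • Mb (m + n)
  br_Mb_Mb : ∀ n m : ℤ, br (Mb n) (Mb m) = 0
  alpha_Lb : ∀ n : ℤ, α (Lb n) = qang q n • Lb n
  alpha_Mb : ∀ n : ℤ, α (Mb n) = qang q n • Mb n

namespace IsQDeformedW22

variable {q : ℂ} {br : Wq →ₗ[ℂ] Wq →ₗ[ℂ] Wq} {α : Wq →ₗ[ℂ] Wq}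

theorem alpha_weightVec (hW : IsQDeformedW22 q br α) (c d : ℂ) (n : ℤ) :
    α (weightVec c d n) = qang q n • weightVec c d n := by
  simp only [weightVec, map_add, map_smul, hW.alpha_Lb, hW.alpha_Mb, smul_add, smul_comm c,
    smul_comm d]

theorem br_Lb_weightVec (hW : IsQDeformedW22 q br α) (c d : ℂ) (n m : ℤ) :
    br (Lb n) (weightVec c d m) = qnum q (m - n) • weightVec c d (m + n) := by
  simp only [weightVec, map_add, map_smul, hW.br_Lb_Lb, hW.br_Lb_Mb, smul_add, smul_comm c,
    smul_comm d]

theorem br_Lb_zero_weightVec (hW : IsQDeformedW22 q br α) (c d : ℂ) (n : ℤ) :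
    br (Lb 0) (weightVec c d n) = qnum q n • weightVec c d n := by
  simpa using hW.br_Lb_weightVec c d 0 n

theorem exists_eq_weightVec_zero (hW : IsQDeformedW22 q br α) (hq : IsGenericQ q) {x : Wq}
    (hx : α x = qang q 0 • x) : ∃ c d, x = weightVec c d 0 :=
  exists_eq_weightVec_of_diagonal hW.alpha_weightVec
    (fun _ hj => by simpa only [qang_zero] using hq.qang_ne_two hj) hx

theorem alpha_alpha (hW : IsQDeformedW22 q br α) (hq : IsGenericQ q) (x : Wq) :
    α (α x) = (4 : ℂ) • x + (q - q⁻¹) ^ 2 • br (Lb 0) (br (Lb 0) x) := by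
  have h : α ∘ₗ α = (4 : ℂ) • LinearMap.id + (q - q⁻¹) ^ 2 • br (Lb 0) ∘ₗ br (Lb 0) := by
    refine linearMap_ext fun c d n => ?_
    simp only [LinearMap.comp_apply, LinearMap.add_apply, LinearMap.smul_apply, LinearMap.id_apply,
      hW.alpha_weightVec, hW.br_Lb_zero_weightVec, map_smul, smul_smul, ← add_smul]
    congr 1
    linear_combination hq.qang_sq n
  exact LinearMap.congr_fun h x

theorem br_Lb_zero_br_Lb_zero (hW : IsQDeformedW22 q br α) (hq : IsGenericQ q) {x : Wq} {m : ℤ}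
    (hx : α x = qang q m • x) : br (Lb 0) (br (Lb 0) x) = qnum q m ^ 2 • x := by
  have h := hW.alpha_alpha hq x
  rw [hx, map_smul, hx] at h
  refine smul_right_injective Wq (pow_ne_zero 2 hq.sub_inv_ne_zero) ?_
  linear_combination (norm := module) hq.qang_sq m • x - h

theorem eq_zero_of_qnum_smul_eq (hW : IsQDeformedW22 q br α) (hq : IsGenericQ q) {k : ℕ}
    (hk : 1 ≤ k) {x : Wq} {m : ℤ} (hm : m ≠ 0) (hα : α x = qang q m • x)
    (hx : qnum q m • x = (2 : ℂ) ^ k • br (Lb 0) x) : x = 0 :=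
  eq_zero_of_smul_eq_smul_apply (hq.qnum_ne_zero hm) (two_pow_mul_two_pow_ne_one hk)
    (hW.br_Lb_zero_br_Lb_zero hq hα) hx

end IsQDeformedW22

namespace IsAlphaDerivation

variable {q : ℂ} {br : Wq →ₗ[ℂ] Wq →ₗ[ℂ] Wq} {α D : Wq →ₗ[ℂ] Wq} {k : ℕ} {c d : ℂ}

theorem exists_map_Lb_zero_eq (hD : IsAlphaDerivation br α k D) (hW : IsQDeformedW22 q br α)
    (hq : IsGenericQ q) (hk : 1 ≤ k) :
    ∃ c d, D (Lb 0) = (1 - (2 : ℂ) ^ k) • weightVec c d 0 := by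
  obtain ⟨a, b, hab⟩ := hW.exists_eq_weightVec_zero hq (hD.alpha_map (hW.alpha_Lb 0))
  have h2 : 1 - (2 : ℂ) ^ k ≠ 0 := one_sub_two_pow_ne_zero hk
  exact ⟨a / (1 - 2 ^ k), b / (1 - 2 ^ k), by
    rw [hab, smul_weightVec, mul_div_cancel₀ _ h2, mul_div_cancel₀ _ h2]⟩

theorem map_Lb_eq (hD : IsAlphaDerivation br α k D) (hW : IsQDeformedW22 q br α)
    (hq : IsGenericQ q) (hk : 1 ≤ k) (hD0 : D (Lb 0) = (1 - (2 : ℂ) ^ k) • weightVec c d 0)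
    {m : ℤ} (hm : m ≠ 0) : D (Lb m) = qang q m ^ k • weightVec c d m := by
  have h_leibniz : qnum q m • D (Lb m) = (2 : ℂ) ^ k • br (Lb 0) (D (Lb m)) +
      (qnum q m * qang q m ^ k * (1 - 2 ^ k)) • weightVec c d m := by
    have h := hD.map_br_of_alpha_eq_smul (hW.alpha_Lb 0) (hW.alpha_Lb m)
    rw [hW.br_Lb_Lb, hD0, map_smul, map_smul, hW.br_Lb_weightVec, qang_zero, sub_zero, add_zero,
      zero_sub, zero_add, qnum_neg] at h
    rw [h]
    module
  refine sub_eq_zero.mp (hW.eq_zero_of_qnum_smul_eq hq hk hm ?_ ?_)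
  · rw [map_sub, map_smul, hD.alpha_map (hW.alpha_Lb m), hW.alpha_weightVec]
    module
  · rw [smul_sub, h_leibniz, map_sub, map_smul, hW.br_Lb_zero_weightVec]
    module

theorem map_Lb_add_eq (hD : IsAlphaDerivation br α k D) (hW : IsQDeformedW22 q br α)
    (hq : IsGenericQ q) (hk : 1 ≤ k) (hD0 : D (Lb 0) = (1 - (2 : ℂ) ^ k) • weightVec c d 0)
    {n m : ℤ} (hn : n ≠ 0) (hm : m ≠ 0) (hnm : n ≠ m) :
    D (Lb (m + n)) = (2 * qang q m ^ k * qang q n ^ k) • weightVec c d (m + n) := by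
  have h := hD.map_br_of_alpha_eq_smul (hW.alpha_Lb n) (hW.alpha_Lb m)
  rw [hW.br_Lb_Lb, hD.map_Lb_eq hW hq hk hD0 hn, hD.map_Lb_eq hW hq hk hD0 hm, map_smul, map_smul,
    map_smul, hW.br_Lb_weightVec, hW.br_Lb_weightVec, ← neg_sub m n, qnum_neg, add_comm n m] at h
  refine smul_right_injective Wq (hq.qnum_ne_zero (sub_ne_zero.mpr hnm.symm)) ?_
  simp only [h]
  module

theorem map_Lb_zero (hD : IsAlphaDerivation br α k D) (hW : IsQDeformedW22 q br α)
    (hq : IsGenericQ q) (hk : 1 ≤ k) : D (Lb 0) = 0 := by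
  obtain ⟨c, d, hD0⟩ := hD.exists_map_Lb_zero_eq hW hq hk
  by_contra h_ne
  have h_inj (n : ℤ) : Function.Injective fun a : ℂ => a • weightVec c d n := by
    have h_vec : weightVec c d n ≠ 0 := fun h => h_ne <| by
      rw [hD0, weightVec_eq_zero_iff.mpr (weightVec_eq_zero_iff.mp h), smul_zero]
    exact smul_left_injective ℂ h_vec
  have h_sq {m : ℤ} (hm : m ≠ 0) : 1 - (2 : ℂ) ^ k = 2 * qang q m ^ k * qang q m ^ k := by
    have h := hD.map_Lb_add_eq hW hq hk hD0 (neg_ne_zero.mpr hm) hm (by omega)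
    rw [add_neg_cancel, hD0, qang_neg] at h
    exact h_inj 0 h
  have h_mul : qang q 1 ^ k = 2 * qang q 2 ^ k * qang q 1 ^ k := by
    have h := hD.map_Lb_add_eq hW hq hk hD0 (n := -1) (m := 2) (by decide) (by decide) (by decide)
    rw [show (2 + -1 : ℤ) = 1 from rfl, hD.map_Lb_eq hW hq hk hD0 one_ne_zero, qang_neg] at h
    exact h_inj 1 h
  exact ne_two_mul_mul_of_one_sub_two_pow_eq hk (h_sq one_ne_zero) (h_sq two_ne_zero) h_mul

theorem map_weightVec_of_ne_zero (hD : IsAlphaDerivation br α k D) (hW : IsQDeformedW22 q br α)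
    (hq : IsGenericQ q) (hk : 1 ≤ k) (c d : ℂ) {m : ℤ} (hm : m ≠ 0) :
    D (weightVec c d m) = 0 := by
  have hα := hW.alpha_weightVec c d m
  refine hW.eq_zero_of_qnum_smul_eq hq hk hm (hD.alpha_map hα) ?_
  have h := hD.map_br_of_alpha_eq_smul (hW.alpha_Lb 0) hα
  rwa [hW.br_Lb_zero_weightVec, map_smul, hD.map_Lb_zero hW hq hk, map_zero, smul_zero, sub_zero,
    qang_zero] at h

theorem map_weightVec_zero (hD : IsAlphaDerivation br α k D) (hW : IsQDeformedW22 q br α)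
    (hq : IsGenericQ q) (hk : 1 ≤ k) (c d : ℂ) : D (weightVec c d 0) = 0 := by
  have hL : D (Lb 1) = 0 := by
    rw [← weightVec_one_zero, hD.map_weightVec_of_ne_zero hW hq hk 1 0 one_ne_zero]
  have h := hD.map_br (Lb 1) (weightVec c d (-1))
  rw [hW.br_Lb_weightVec, map_smul, hL, hD.map_weightVec_of_ne_zero hW hq hk c d (m := -1)
    (by decide), map_zero, map_zero, sub_zero, neg_add_cancel] at h
  exact (smul_eq_zero.mp h).resolve_left (hq.qnum_ne_zero (by decide))

end IsAlphaDerivation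

/-- For every `k ≥ 1`, every `αᵏ`-derivation of the q-deformed W(2,2)
algebra is zero.  Here `α ^ k` is the `k`-fold composition of `α`. -/
theorem alpha_k_derivation_eq_zero (q : ℂ) (hq0 : q ≠ 0)
    (hq1 : ∀ k : ℤ, 1 ≤ k → q ^ k ≠ 1)
    (br : Wq →ₗ[ℂ] Wq →ₗ[ℂ] Wq) (α : Wq →ₗ[ℂ] Wq)
    (hLL : ∀ n m : ℤ, br (Lb n) (Lb m) = qnum q (m - n) • Lb (m + n))
    (hLM : ∀ n m : ℤ, br (Lb n) (Mb m) = qnum q (m - n) • Mb (m + n))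
    (hML : ∀ m n : ℤ, br (Mb m) (Lb n) = qnum q (n - m) • Mb (m + n))
    (hMM : ∀ n m : ℤ, br (Mb n) (Mb m) = 0)
    (hαL : ∀ n : ℤ, α (Lb n) = qang q n • Lb n)
    (hαM : ∀ n : ℤ, α (Mb n) = qang q n • Mb n)
    (k : ℕ) (hk : 1 ≤ k)
    (D : Wq →ₗ[ℂ] Wq)
    (hDα : ∀ x : Wq, D (α x) = α (D x))
    (hDder : ∀ x y : Wq,
      D (br x y) = br ((α ^ k) x) (D y) - br ((α ^ k) y) (D x)) :
    D = 0 := by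
  have hq : IsGenericQ q := ⟨hq0, hq1⟩
  have hW : IsQDeformedW22 q br α := ⟨hLL, hLM, hML, hMM, hαL, hαM⟩
  have hD : IsAlphaDerivation br α k D := ⟨hDα, hDder⟩
  refine linearMap_ext fun c d n => ?_
  rcases eq_or_ne n 0 with rfl | hn
  · exact hD.map_weightVec_zero hW hq hk c d
  · exact hD.map_weightVec_of_ne_zero hW hq hk c d hn
end
end
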